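/- arXiv:2403.06395 — 2 statements merged into one kernel-verified Lean document; each statement's English description precedes it below -/
import Mathlib

section
/- Let T : ℂ[t] → ℂ[t] be a linear operator such that u_n := T(t^n) has degree at most n for every n ≥ 0, and let (q_i)_{i≥0} be polynomials in ℂ[t] with deg q_i ≤ i for every i. Define s_{k,i}(t) = Σ_{j=i}^{k} C(k,j) · (u_j^{(i)}(t)/i!) · (−t)^{k−j} for 0 ≤ i ≤ k (and s_{k,i} = 0 for i > k), and r_k(t) = Σ_{i=0}^{k} s_{k,i}(t) · q_i(t) for k ≥ 0. Then for every polynomial w one has Σ_{i≥0} q_i(t) · (T w)^{(i)}(t)/i! = Σ_{k≥0} r_k(t) · w^{(k)}(t)/k! (both sums are finite). -/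
/-!
Every linear operator `L` on `R[X]` is a differential operator of infinite order:
`L w = ∑ k, c_k * w^{(k)} / k!`. Indeed, expanding `w^{(j)} / j!` around `X` and evaluating at `0`
gives `∑ k, C(k, j) (-X) ^ (k - j) * w^{(k)} / k! = w_j`, the `j`-th coefficient of `w`;
substituting this into `L w = ∑ j, w_j L(X ^ j)` and exchanging the sums yields
`c_k = ∑ j ≤ k, C(k, j) (-X) ^ (k - j) * L(X ^ j)`. For `L w = (T w)^{(i)} / i!` with `T` lower
triangular, the terms with `j < i` vanish and `c_k` is the coefficient `s_{k,i}`. Multiplying by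
`q_i` and summing over `i` gives `r_k`.
-/

open Polynomial

section Semiring

variable {R : Type*} [Semiring R]

theorem hasseDeriv_map {S : Type*} [Semiring S] (φ : R →+* S) (k : ℕ) (f : R[X]) :
    hasseDeriv k (f.map φ) = (hasseDeriv k f).map φ := by
  ext n
  simp [hasseDeriv_coeff]

theorem map_eq_sum_coeff_smul {M : Type*} [AddCommMonoid M] [Module R M] (L : R[X] →ₗ[R] M)
    {w : R[X]} {n : ℕ} (hw : w.natDegree < n) :
    L w = ∑ j ∈ Finset.range n, w.coeff j • L (X ^ j) := by
  conv_lhs => rw [w.as_sum_range' n hw]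
  simp only [map_sum, ← smul_X_eq_monomial, map_smul]

/-- Lower triangularity of a linear operator on polynomials with respect to the monomial basis
`1, X, X ^ 2, …`. -/
def IsLowerTriangular (T : R[X] →ₗ[R] R[X]) : Prop :=
  ∀ n, (T (X ^ n)).natDegree ≤ n

theorem IsLowerTriangular.natDegree_map_le {T : R[X] →ₗ[R] R[X]} (hT : IsLowerTriangular T)
    (w : R[X]) : (T w).natDegree ≤ w.natDegree := by
  rw [map_eq_sum_coeff_smul T w.natDegree.lt_succ_self]
  refine natDegree_sum_le_of_forall_le _ _ fun j hj ↦ ?_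
  exact (natDegree_smul_le _ _).trans ((hT j).trans (Finset.mem_range_succ_iff.1 hj))

theorem sum_range_mul_hasseDeriv_eq (q : ℕ → R[X]) {f : R[X]} {m n : ℕ}
    (hm : f.natDegree < m) (hmn : m ≤ n) :
    ∑ i ∈ Finset.range m, q i * hasseDeriv i f = ∑ i ∈ Finset.range n, q i * hasseDeriv i f := by
  refine Finset.sum_subset (Finset.range_mono hmn) fun i _ hi ↦ ?_
  have hfi : f.natDegree < i := hm.trans_le (by simpa using hi)
  rw [hasseDeriv_eq_zero_of_lt_natDegree f i hfi, mul_zero]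

end Semiring

theorem sum_hasseDeriv_mul_pow {R : Type*} [CommSemiring R] {f : R[X]} {n : ℕ}
    (hf : f.natDegree < n) (p : R[X]) :
    ∑ k ∈ Finset.range n, hasseDeriv k f * p ^ k = f.comp (p + X) := by
  have hcoeff (k : ℕ) : (taylor X (f.map C)).coeff k = hasseDeriv k f := by
    rw [taylor_coeff, hasseDeriv_map, eval_map, eval₂_C_X]
  have hdeg : (taylor X (f.map C)).natDegree < n := by
    rw [natDegree_taylor]
    exact natDegree_map_le.trans_lt hf
  calc ∑ k ∈ Finset.range n, hasseDeriv k f * p ^ k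
      = (taylor X (f.map C)).eval p := by simp only [eval_eq_sum_range' hdeg, hcoeff]
    _ = f.comp (p + X) := by rw [taylor_eval, eval_map, comp]

section CommRing

variable {R : Type*} [CommRing R]

theorem sum_hasseDeriv_mul_neg_X_pow {f : R[X]} {n : ℕ} (hf : f.natDegree < n) :
    ∑ k ∈ Finset.range n, hasseDeriv k f * (-X) ^ k = C (f.coeff 0) := by
  rw [sum_hasseDeriv_mul_pow hf, neg_add_cancel, comp_zero, coeff_zero_eq_eval_zero]

theorem sum_choose_mul_neg_X_pow_mul_hasseDeriv {w : R[X]} {n j : ℕ} (hw : w.natDegree < n)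
    (hj : j < n) :
    ∑ k ∈ Finset.Ico j n, (k.choose j : R[X]) * (-X) ^ (k - j) * hasseDeriv k w =
      C (w.coeff j) := by
  have hdeg : (hasseDeriv j w).natDegree < n - j :=
    (natDegree_hasseDeriv_le w j).trans_lt (by lia)
  have hcomp (m : ℕ) :
      ((j + m).choose j : R[X]) * hasseDeriv (j + m) w = hasseDeriv m (hasseDeriv j w) := by
    rw [← LinearMap.comp_apply, hasseDeriv_comp, LinearMap.smul_apply, nsmul_eq_mul, add_comm m,
      Nat.choose_symm_add]
  calc ∑ k ∈ Finset.Ico j n, (k.choose j : R[X]) * (-X) ^ (k - j) * hasseDeriv k w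
      = ∑ m ∈ Finset.range (n - j), hasseDeriv m (hasseDeriv j w) * (-X) ^ m := by
        rw [Finset.sum_Ico_eq_sum_range]
        refine Finset.sum_congr rfl fun m _ ↦ ?_
        rw [Nat.add_sub_cancel_left, mul_right_comm, hcomp]
    _ = C ((hasseDeriv j w).coeff 0) := sum_hasseDeriv_mul_neg_X_pow hdeg
    _ = C (w.coeff j) := by simp [hasseDeriv_coeff]

/-- The coefficient of `w^{(k)} / k!` when the linear operator `L` is written as a differential
operator of infinite order with polynomial coefficients. -/
noncomputable def diffOpCoeff (L : R[X] →ₗ[R] R[X]) (k : ℕ) : R[X] :=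
  ∑ j ∈ Finset.range (k + 1), (k.choose j : R[X]) * (-X) ^ (k - j) * L (X ^ j)

theorem map_eq_sum_diffOpCoeff_mul_hasseDeriv (L : R[X] →ₗ[R] R[X]) {w : R[X]} {n : ℕ}
    (hw : w.natDegree < n) :
    L w = ∑ k ∈ Finset.range n, diffOpCoeff L k * hasseDeriv k w := by
  calc L w
      = ∑ j ∈ Finset.range n, C (w.coeff j) * L (X ^ j) := by
        simp only [map_eq_sum_coeff_smul L hw, smul_eq_C_mul]
    _ = ∑ j ∈ Finset.range n, ∑ k ∈ Finset.Ico j n,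
          (k.choose j : R[X]) * (-X) ^ (k - j) * hasseDeriv k w * L (X ^ j) := by
        refine Finset.sum_congr rfl fun j hj ↦ ?_
        rw [← Finset.sum_mul, sum_choose_mul_neg_X_pow_mul_hasseDeriv hw (Finset.mem_range.1 hj)]
    _ = ∑ k ∈ Finset.range n, ∑ j ∈ Finset.range (k + 1),
          (k.choose j : R[X]) * (-X) ^ (k - j) * hasseDeriv k w * L (X ^ j) := by
        refine Finset.sum_comm' fun j k ↦ ?_
        simp only [Finset.mem_range, Finset.mem_Ico]
        lia
    _ = ∑ k ∈ Finset.range n, diffOpCoeff L k * hasseDeriv k w := by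
        simp only [diffOpCoeff, Finset.sum_mul, mul_right_comm]

theorem IsLowerTriangular.diffOpCoeff_hasseDeriv_comp {T : R[X] →ₗ[R] R[X]}
    (hT : IsLowerTriangular T) (i k : ℕ) :
    diffOpCoeff (hasseDeriv i ∘ₗ T) k =
      ∑ j ∈ Finset.Icc i k, (k.choose j : R[X]) * (-X) ^ (k - j) * hasseDeriv i (T (X ^ j)) := by
  refine (Finset.sum_subset (fun j hj ↦ ?_) fun j hjk hj ↦ ?_).symm
  · exact Finset.mem_range_succ_iff.2 (Finset.mem_Icc.1 hj).2
  · have hji : j < i := by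
      simp only [Finset.mem_range, Finset.mem_Icc] at hjk hj
      lia
    rw [LinearMap.comp_apply, hasseDeriv_eq_zero_of_lt_natDegree _ _ ((hT j).trans_lt hji),
      mul_zero]

theorem IsLowerTriangular.diffOpCoeff_hasseDeriv_comp_of_lt {T : R[X] →ₗ[R] R[X]}
    (hT : IsLowerTriangular T) {i k : ℕ} (hki : k < i) :
    diffOpCoeff (hasseDeriv i ∘ₗ T) k = 0 := by
  rw [hT.diffOpCoeff_hasseDeriv_comp, Finset.Icc_eq_empty_of_lt hki, Finset.sum_empty]

theorem IsLowerTriangular.sum_mul_hasseDeriv_map {T : R[X] →ₗ[R] R[X]}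
    (hT : IsLowerTriangular T) (q : ℕ → R[X]) {w : R[X]} {n : ℕ} (hw : w.natDegree < n) :
    ∑ i ∈ Finset.range n, q i * hasseDeriv i (T w) =
      ∑ k ∈ Finset.range n,
        (∑ i ∈ Finset.range (k + 1), diffOpCoeff (hasseDeriv i ∘ₗ T) k * q i) *
          hasseDeriv k w := by
  have hinner {k : ℕ} (hk : k ∈ Finset.range n) :
      ∑ i ∈ Finset.range (k + 1), diffOpCoeff (hasseDeriv i ∘ₗ T) k * q i =
        ∑ i ∈ Finset.range n, diffOpCoeff (hasseDeriv i ∘ₗ T) k * q i := by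
    refine Finset.sum_subset (Finset.range_mono (Finset.mem_range.1 hk)) fun i _ hi ↦ ?_
    rw [hT.diffOpCoeff_hasseDeriv_comp_of_lt (by simpa using hi), zero_mul]
  calc ∑ i ∈ Finset.range n, q i * hasseDeriv i (T w)
      = ∑ i ∈ Finset.range n, ∑ k ∈ Finset.range n,
          diffOpCoeff (hasseDeriv i ∘ₗ T) k * q i * hasseDeriv k w := by
        refine Finset.sum_congr rfl fun i _ ↦ ?_
        rw [← LinearMap.comp_apply, map_eq_sum_diffOpCoeff_mul_hasseDeriv _ hw, Finset.mul_sum]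
        exact Finset.sum_congr rfl fun k _ ↦ by ring
    _ = ∑ k ∈ Finset.range n,
          (∑ i ∈ Finset.range n, diffOpCoeff (hasseDeriv i ∘ₗ T) k * q i) * hasseDeriv k w := by
        simp only [Finset.sum_mul]
        exact Finset.sum_comm
    _ = _ := Finset.sum_congr rfl fun k hk ↦ by rw [hinner hk]

end CommRing

section Field

variable {K : Type*} [Field K] [CharZero K]

theorem inv_factorial_smul_iterate_derivative (k : ℕ) (w : K[X]) :
    (k.factorial : K)⁻¹ • derivative^[k] w = hasseDeriv k w := by
  rw [← factorial_smul_hasseDeriv, LinearMap.smul_apply, ← Nat.cast_smul_eq_nsmul K,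
    inv_smul_smul₀ (Nat.cast_ne_zero.2 k.factorial_ne_zero)]

theorem inv_factorial_smul_mul_iterate_derivative (k : ℕ) (p w : K[X]) :
    (k.factorial : K)⁻¹ • (p * derivative^[k] w) = p * hasseDeriv k w := by
  rw [← mul_smul_comm, inv_factorial_smul_iterate_derivative]

theorem choose_mul_inv_factorial_smul_iterate_derivative_mul (k i j : ℕ) (p w : K[X]) :
    ((k.choose j : K) * (i.factorial : K)⁻¹) • (derivative^[i] w * p) =
      (k.choose j : K[X]) * p * hasseDeriv i w := by
  rw [mul_smul, mul_comm _ p, inv_factorial_smul_mul_iterate_derivative, Nat.cast_smul_eq_nsmul,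
    nsmul_eq_mul, mul_assoc]

theorem differential_operator_multiplication_formula_general
    (T : K[X] →ₗ[K] K[X])
    (u : ℕ → K[X]) (hu : ∀ n, u n = T (X ^ n))
    (hdeg : ∀ n, (u n).natDegree ≤ n)
    (q : ℕ → K[X])
    (s : ℕ → ℕ → K[X])
    (hs : ∀ k i, s k i = ∑ j ∈ Finset.Icc i k,
        ((k.choose j : K) * (i.factorial : K)⁻¹) • (derivative^[i] (u j) * (-X) ^ (k - j)))
    (r : ℕ → K[X])
    (hr : ∀ k, r k = ∑ i ∈ Finset.range (k + 1), s k i * q i)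
    (w : K[X]) :
    ∑ i ∈ Finset.range ((T w).natDegree + 1),
        (i.factorial : K)⁻¹ • (q i * derivative^[i] (T w)) =
      ∑ k ∈ Finset.range (w.natDegree + 1),
        (k.factorial : K)⁻¹ • (r k * derivative^[k] w) := by
  have hT : IsLowerTriangular T := fun n ↦ hu n ▸ hdeg n
  have hs_coeff (k i : ℕ) : s k i = diffOpCoeff (hasseDeriv i ∘ₗ T) k := by
    simp only [hs, hu, choose_mul_inv_factorial_smul_iterate_derivative_mul,
      hT.diffOpCoeff_hasseDeriv_comp]
  simp only [inv_factorial_smul_mul_iterate_derivative, hr, hs_coeff]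
  rw [sum_range_mul_hasseDeriv_eq q (Nat.lt_succ_self _)
    (Nat.succ_le_succ (hT.natDegree_map_le w))]
  exact hT.sum_mul_hasseDeriv_map q w.natDegree.lt_succ_self

end Field

/-- Multiplication formula for triangular operators written as differential operators of
infinite order with polynomial coefficients: if `u_n = T(t^n)` has degree at most `n`,
`deg q_i ≤ i`, `s_{k,i}(t) = Σ_{j=i}^k C(k,j) (u_j^{(i)}(t)/i!) (−t)^{k−j}` and
`r_k = Σ_{i=0}^k s_{k,i} q_i`, then
`Σ_i q_i · (Tw)^{(i)}/i! = Σ_k r_k · w^{(k)}/k!` for every polynomial `w`. -/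
theorem differential_operator_multiplication_formula
    (T : Polynomial ℂ →ₗ[ℂ] Polynomial ℂ)
    (u : ℕ → Polynomial ℂ) (hu : ∀ n, u n = T (X ^ n))
    (hdeg : ∀ n, (u n).natDegree ≤ n)
    (q : ℕ → Polynomial ℂ) (hq : ∀ i, (q i).natDegree ≤ i)
    (s : ℕ → ℕ → Polynomial ℂ)
    (hs : ∀ k i, s k i = ∑ j ∈ Finset.Icc i k,
        ((k.choose j : ℂ) * (i.factorial : ℂ)⁻¹) • (derivative^[i] (u j) * (-X) ^ (k - j)))
    (r : ℕ → Polynomial ℂ)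
    (hr : ∀ k, r k = ∑ i ∈ Finset.range (k + 1), s k i * q i) :
    ∀ w : Polynomial ℂ,
      ∑ i ∈ Finset.range ((T w).natDegree + 1),
          (i.factorial : ℂ)⁻¹ • (q i * derivative^[i] (T w)) =
        ∑ k ∈ Finset.range (w.natDegree + 1),
          (k.factorial : ℂ)⁻¹ • (r k * derivative^[k] w) :=
  differential_operator_multiplication_formula_general T u hu hdeg q s hs r hr
end

section
/- Let f_0, f_1, g_0, g_1 ∈ ℂ with g_1 ≠ 0, and let (u_n)_{n≥0} be a sequence of monic polynomials in ℂ[t] with deg u_n = n satisfying (g_0 + g_1 t)·u_n′(t) + ((f_0 + f_1 t)/2)·u_n″(t) = n·g_1·u_n(t) for every n ≥ 0. Then for every n ≥ 1, Σ_{k=0}^{n−1} (−f_1/(2 g_1))^k · u_n^{(k+1)}(t) = n · u_{n−1}(t), where u_n^{(k+1)} denotes the (k+1)-st derivative of u_n; that is, the monomiality lowering operator of (u_n) is P = Σ_{k≥0} (−f_1/(2g_1))^k D^{k+1} = D exp(−(f_1/(2g_1)) D), differentiation followed by a translation. -/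
open Polynomial

/-!
Write `L = (g₀ + g₁X)D + (h₀ + h₁X)D²` and `L' = L + h₁D`. Since `D L = (L' + g₁) D`, the derivative
of an `L`-eigenpolynomial for `μ` is an `L'`-eigenpolynomial for `μ - g₁`; and if `h₁ + c g₁ = 0`,
then `1 - cD` maps the `μ`-eigenspace of `L` into that of `L'`. Hence `D u_{n+1}` and `(1 - cD) u_n`
lie in the same eigenspace of `L'`. An eigenpolynomial for `n g₁` is determined by its `n`-th
coefficient, so `D u_{n+1} = (n + 1)(1 - cD) u_n`, and the geometric series `∑ cᵏDᵏ` inverts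
`1 - cD`.
-/

section AffineDiffOp

variable {R : Type*} [CommRing R]

/-- The second-order differential operator `(g₀ + g₁X)D + (h₀ + h₁X)D²` on polynomials. The paper's
operator `g∂ + (f/2)∂²` is the case `hᵢ = fᵢ/2`; absorbing the factor `1/2` allows any coefficient
ring. -/
noncomputable def affineDiffOp (g₀ g₁ h₀ h₁ : R) : Module.End R R[X] :=
  LinearMap.mulLeft R (C g₀ + C g₁ * X) ∘ₗ derivative +
    LinearMap.mulLeft R (C h₀ + C h₁ * X) ∘ₗ derivative ∘ₗ derivative

variable {g₀ g₁ h₀ h₁ c μ : R} {m : ℕ} {u v w : R[X]}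

theorem affineDiffOp_apply (g₀ g₁ h₀ h₁ : R) (u : R[X]) :
    affineDiffOp g₀ g₁ h₀ h₁ u =
      (C g₀ + C g₁ * X) * derivative u + (C h₀ + C h₁ * X) * derivative (derivative u) :=
  rfl

theorem derivative_affineDiffOp (g₀ g₁ h₀ h₁ : R) (u : R[X]) :
    derivative (affineDiffOp g₀ g₁ h₀ h₁ u) =
      affineDiffOp (g₀ + h₁) g₁ h₀ h₁ (derivative u) + g₁ • derivative u := by
  simp only [affineDiffOp_apply, derivative_add, derivative_mul, derivative_C, derivative_X,
    C_add, smul_eq_C_mul]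
  ring

theorem affineDiffOp_add_left (g₀ g₁ h₀ h₁ a : R) (u : R[X]) :
    affineDiffOp (g₀ + a) g₁ h₀ h₁ u = affineDiffOp g₀ g₁ h₀ h₁ u + a • derivative u := by
  simp only [affineDiffOp_apply, C_add, smul_eq_C_mul]
  ring

theorem derivative_mem_eigenspace_affineDiffOp
    (hu : u ∈ (affineDiffOp g₀ g₁ h₀ h₁).eigenspace μ) :
    derivative u ∈ (affineDiffOp (g₀ + h₁) g₁ h₀ h₁).eigenspace (μ - g₁) := by
  rw [Module.End.mem_eigenspace_iff] at hu ⊢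
  rw [sub_smul, ← derivative_smul, ← hu, derivative_affineDiffOp, add_sub_cancel_right]

theorem sub_smul_derivative_mem_eigenspace_affineDiffOp (hc : h₁ + c * g₁ = 0)
    (hu : u ∈ (affineDiffOp g₀ g₁ h₀ h₁).eigenspace μ) :
    u - c • derivative u ∈ (affineDiffOp (g₀ + h₁) g₁ h₀ h₁).eigenspace μ := by
  have hu' := Module.End.mem_eigenspace_iff.1 (derivative_mem_eigenspace_affineDiffOp hu)
  rw [Module.End.mem_eigenspace_iff] at hu ⊢
  rw [map_sub, map_smul, hu', affineDiffOp_add_left, hu, eq_neg_of_add_eq_zero_left hc]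
  module

theorem coeff_natDegree_affineDiffOp (g₀ g₁ h₀ h₁ : R) (u : R[X]) :
    (affineDiffOp g₀ g₁ h₀ h₁ u).coeff u.natDegree = u.natDegree * g₁ * u.leadingCoeff := by
  have hone : u.coeff (u.natDegree + 1) = 0 := coeff_eq_zero_of_natDegree_lt (by lia)
  have htwo : u.coeff (u.natDegree + 2) = 0 := coeff_eq_zero_of_natDegree_lt (by lia)
  rw [leadingCoeff, affineDiffOp_apply]
  generalize u.natDegree = j at hone htwo ⊢
  cases j with
  | zero => simp [add_mul, mul_assoc, coeff_derivative, hone, htwo]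
  | succ i =>
    simp only [add_mul, mul_assoc, coeff_add, coeff_C_mul, coeff_X_mul, coeff_derivative, hone,
      htwo]
    push_cast
    ring

variable [IsDomain R] [CharZero R]

theorem natDegree_eq_of_mem_eigenspace_affineDiffOp (hg₁ : g₁ ≠ 0) (hu₀ : u ≠ 0)
    (hu : u ∈ (affineDiffOp g₀ g₁ h₀ h₁).eigenspace (m * g₁)) : u.natDegree = m := by
  have hlead : u.natDegree * g₁ * u.leadingCoeff = m * g₁ * u.leadingCoeff := by
    rw [← coeff_natDegree_affineDiffOp g₀ g₁ h₀ h₁, Module.End.mem_eigenspace_iff.1 hu, coeff_smul,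
      smul_eq_mul, coeff_natDegree]
  exact_mod_cast mul_right_cancel₀ hg₁ (mul_right_cancel₀ (leadingCoeff_ne_zero.2 hu₀) hlead)

theorem eq_of_mem_eigenspace_affineDiffOp_of_coeff_eq (hg₁ : g₁ ≠ 0)
    (hv : v ∈ (affineDiffOp g₀ g₁ h₀ h₁).eigenspace (m * g₁))
    (hw : w ∈ (affineDiffOp g₀ g₁ h₀ h₁).eigenspace (m * g₁))
    (hcoeff : v.coeff m = w.coeff m) : v = w := by
  by_contra hne
  have hdeg : (v - w).natDegree = m :=
    natDegree_eq_of_mem_eigenspace_affineDiffOp hg₁ (sub_ne_zero.2 hne) (sub_mem hv hw)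
  apply leadingCoeff_ne_zero.2 (sub_ne_zero.2 hne)
  rw [leadingCoeff, hdeg, coeff_sub, hcoeff, sub_self]

theorem derivative_eq_smul_of_mem_eigenspace_affineDiffOp
    (hg₁ : g₁ ≠ 0) (hc : h₁ + c * g₁ = 0) (hv_monic : v.Monic) (hw_monic : w.Monic)
    (hv : v ∈ (affineDiffOp g₀ g₁ h₀ h₁).eigenspace (m * g₁))
    (hw : w ∈ (affineDiffOp g₀ g₁ h₀ h₁).eigenspace ((m + 1 : ℕ) * g₁)) :
    derivative w = ((m + 1 : ℕ) : R) • (v - c • derivative v) := by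
  have hv_deg := natDegree_eq_of_mem_eigenspace_affineDiffOp hg₁ hv_monic.ne_zero hv
  have hw_deg := natDegree_eq_of_mem_eigenspace_affineDiffOp hg₁ hw_monic.ne_zero hw
  have hv_coeff : v.coeff m = 1 := hv_deg ▸ hv_monic.coeff_natDegree
  have hw_coeff : w.coeff (m + 1) = 1 := hw_deg ▸ hw_monic.coeff_natDegree
  have hv_succ : v.coeff (m + 1) = 0 := coeff_eq_zero_of_natDegree_lt (by lia)
  have hw' : derivative w ∈ (affineDiffOp (g₀ + h₁) g₁ h₀ h₁).eigenspace (m * g₁) := by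
    simpa [add_mul] using derivative_mem_eigenspace_affineDiffOp hw
  refine eq_of_mem_eigenspace_affineDiffOp_of_coeff_eq hg₁ hw' (Submodule.smul_mem _ _
    (sub_smul_derivative_mem_eigenspace_affineDiffOp hc hv)) ?_
  simp [coeff_derivative, hv_coeff, hw_coeff, hv_succ]

end AffineDiffOp

theorem sum_pow_smul_iterate_derivative_sub_smul_derivative {R : Type*} [CommRing R] (c : R)
    {v : R[X]} {n : ℕ} (hv : v.natDegree < n) :
    ∑ k ∈ Finset.range n, c ^ k • derivative^[k] (v - c • derivative v) = v := by
  have hterm (k : ℕ) : c ^ k • derivative^[k] (v - c • derivative v) =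
      c ^ k • derivative^[k] v - c ^ (k + 1) • derivative^[k + 1] v := by
    rw [iterate_derivative_sub, iterate_derivative_smul, ← Function.iterate_succ_apply, smul_sub,
      smul_smul, ← pow_succ]
  simp only [hterm]
  rw [Finset.sum_range_sub' (fun k => c ^ k • derivative^[k] v), iterate_derivative_eq_zero hv]
  simp

theorem eigenpolynomials_lowering_operator_general {K : Type*} [Field K] [CharZero K]
    (f₀ f₁ g₀ g₁ : K) (hg₁ : g₁ ≠ 0) (u : ℕ → K[X]) (hmonic : ∀ n, (u n).Monic)
    (hode : ∀ n : ℕ,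
      (C g₀ + C g₁ * X) * derivative (u n) +
        ((1 : K) / 2) • ((C f₀ + C f₁ * X) * derivative (derivative (u n))) =
      ((n : K) * g₁) • u n) (n : ℕ) (hn : 1 ≤ n) :
    ∑ k ∈ Finset.range n, (-f₁ / (2 * g₁)) ^ k • derivative^[k + 1] (u n) =
      (n : K) • u (n - 1) := by
  obtain ⟨m, rfl⟩ := Nat.exists_eq_add_of_le' hn
  have heigen (n : ℕ) :
      u n ∈ (affineDiffOp g₀ g₁ (f₀ / 2) (f₁ / 2)).eigenspace ((n : K) * g₁) := by
    rw [Module.End.mem_eigenspace_iff, ← hode n, affineDiffOp_apply]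
    simp only [div_eq_mul_inv, C_mul, smul_eq_C_mul, C_1]
    ring
  have hc : f₁ / 2 + -f₁ / (2 * g₁) * g₁ = 0 := by field_simp; ring
  have hdeg := natDegree_eq_of_mem_eigenspace_affineDiffOp hg₁ (hmonic m).ne_zero (heigen m)
  have hrec := derivative_eq_smul_of_mem_eigenspace_affineDiffOp hg₁ hc
    (hmonic m) (hmonic (m + 1)) (heigen m) (heigen (m + 1))
  simp only [Function.iterate_succ_apply, hrec, iterate_derivative_smul,
    smul_comm _ ((m + 1 : ℕ) : K)]
  rw [← Finset.smul_sum, sum_pow_smul_iterate_derivative_sub_smul_derivative _ (by lia),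
    Nat.add_sub_cancel]

/-- The monomiality lowering operator of the monic eigenpolynomials of
`B = (g₀+g₁t)∂ + ((f₀+f₁t)/2)∂²` (eigenvalue `n·g₁`, `g₁ ≠ 0`) is
`P = Σ_k (−f₁/(2g₁))^k D^{k+1} = D·exp(−(f₁/(2g₁))D)`:
for `n ≥ 1`, `Σ_{k=0}^{n−1} (−f₁/(2g₁))^k u_n^{(k+1)} = n·u_{n−1}`. -/
theorem eigenpolynomials_lowering_operator
    (f₀ f₁ g₀ g₁ : ℂ) (hg₁ : g₁ ≠ 0)
    (u : ℕ → Polynomial ℂ)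
    (hmonic : ∀ n, (u n).Monic) (hdeg : ∀ n, (u n).natDegree = n)
    (hode : ∀ n : ℕ,
      (C g₀ + C g₁ * X) * derivative (u n) +
        ((1 : ℂ) / 2) • ((C f₀ + C f₁ * X) * derivative (derivative (u n))) =
      ((n : ℂ) * g₁) • u n) :
    ∀ n : ℕ, 1 ≤ n →
      ∑ k ∈ Finset.range n, (-f₁ / (2 * g₁)) ^ k • derivative^[k + 1] (u n) =
        (n : ℂ) • u (n - 1) :=
  eigenpolynomials_lowering_operator_general f₀ f₁ g₀ g₁ hg₁ u hmonic hode
end
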